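/- arXiv:1004.3088 — 2 statements merged into one kernel-verified Lean document; each statement's English description precedes it below -/
import Mathlib

section
/- Let Σ = S^{n-1} with n ≥ 3 and let ψ be as above. Then ∫_Σ ψ x_n^6 dσ = ( -(n+6)/7 + (n-1)/2 + 3(n-1)(n+1)/(8(n+8)) + 33(n-1)(n+1)(n+3)/(80(n+8)(n+10)) ) ∫_Σ x_n^8 dσ, and this quantity is strictly positive for every integer n ≥ 3. -/
/-!
Integration over the sphere is integration against `μH[n-1]` restricted to the unit sphere
(`sphMeasure`). Two facts about this measure suffice.

It is finite and nonzero. Finiteness holds because inverse stereographic projection is Lipschitz on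
a ball of a hyperplane and covers a hemisphere; positivity holds because the orthogonal projection
to a hyperplane is `1`-Lipschitz and the image of the sphere contains the unit ball, which has
positive `(n-1)`-dimensional measure.

It is invariant under linear isometries. By reflections, `∫ ⟪v, x⟫ ^ p` depends on `v` only through
the factor `‖v‖ ^ p` (`integral_inner_pow`). Taking `v = e_i + u e_j` and comparing coefficients of
`u²` gives `(2m+1) ∫ x_i^(2m) x_j² = ∫ x_i^(2m+2)` (`integral_mixed_moment`), and summing over `j`,
with `∑ x_j² = 1`, gives the moment recursion `(2m+1) ∫ x_i^(2m) = (n+2m) ∫ x_i^(2m+2)`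
(`moment_recursion`), without any differentiation on the sphere.

The recursion expresses the integral as a multiple of `∫ x_n ^ 8`, and `∫ x_n ^ 8` as a positive
multiple of the total mass. The factor in front of `∫ x_n ^ 8` is positive because, in terms of
`n - 3`, its numerator has positive coefficients.
-/

open MeasureTheory
open scoped RealInnerProductSpace

noncomputable section

/-- Degree-zero homogeneous extension of a function on `ℝ^n`, used to compute
intrinsic operators on the unit sphere extrinsically: the extension agrees with
`f` on the unit sphere and is constant along rays from the origin. -/
def sphExt {n : ℕ} (f : EuclideanSpace ℝ (Fin n) → ℝ) (y : EuclideanSpace ℝ (Fin n)) : ℝ :=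
  f (‖y‖⁻¹ • y)

/-- The Laplace–Beltrami operator of the round unit sphere, computed at a point of the
sphere as the Euclidean Laplacian of the degree-zero homogeneous extension. -/
def sphLaplacian {n : ℕ} (f : EuclideanSpace ℝ (Fin n) → ℝ) (x : EuclideanSpace ℝ (Fin n)) : ℝ :=
  ∑ i : Fin n, fderiv ℝ (fun y => fderiv ℝ (sphExt f) y (EuclideanSpace.single i 1)) x
    (EuclideanSpace.single i 1)

/-- The intrinsic (tangential) gradient on the round unit sphere, computed at a point of
the sphere as the Euclidean gradient of the degree-zero homogeneous extension. -/
def sphGradient {n : ℕ} (f : EuclideanSpace ℝ (Fin n) → ℝ) (x : EuclideanSpace ℝ (Fin n)) :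
    EuclideanSpace ℝ (Fin n) :=
  gradient (sphExt f) x

open Metric Module in
/-- Inverse stereographic projection from a unit vector `v` is smooth, hence Lipschitz on the
closed ball of radius `2` of the hyperplane `vᗮ`, and maps that ball onto a set containing the
hemisphere opposite to `v`. -/
theorem hausdorffMeasure_hemisphere_lt_top {E : Type*} [NormedAddCommGroup E]
    [InnerProductSpace ℝ E] [FiniteDimensional ℝ E] [MeasurableSpace E] [BorelSpace E]
    {k : ℕ} (hk : finrank ℝ E = k + 1) {v : E} (hv : ‖v‖ = 1) :
    μH[(k : ℝ)] {x ∈ sphere (0 : E) 1 | ⟪v, x⟫ ≤ 0} < ⊤ := by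
  have hfin : finrank ℝ (ℝ ∙ v)ᗮ = k := by
    have := Submodule.finrank_add_finrank_orthogonal (ℝ ∙ v)
    rw [finrank_span_singleton (by rintro rfl; simp at hv), hk] at this
    omega
  set F : (ℝ ∙ v)ᗮ → E := fun w => stereoInvFunAux v (w : E) with hF
  have hFs : ContDiff ℝ 1 F := contDiff_stereoInvFunAux.comp (ℝ ∙ v)ᗮ.subtypeL.contDiff
  have hcpt : IsCompact (closedBall (0 : (ℝ ∙ v)ᗮ) 2) := isCompact_closedBall _ _
  obtain ⟨K, hK⟩ := (hFs.contDiffOn.locallyLipschitzOn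
    (convex_closedBall (0 : (ℝ ∙ v)ᗮ) 2)).exists_lipschitzOnWith_of_compact hcpt
  have hsub : {x ∈ sphere (0 : E) 1 | ⟪v, x⟫ ≤ 0} ⊆ F '' closedBall 0 2 := by
    rintro x ⟨hx, hvx⟩
    have hx1 : ‖x‖ = 1 := by simpa using hx
    refine ⟨stereoToFun v x, ?_, ?_⟩
    · have h1 : ‖(ℝ ∙ v)ᗮ.orthogonalProjectionOnto x‖ ≤ 1 := by
        have := (ℝ ∙ v)ᗮ.norm_orthogonalProjectionOnto_apply_le x
        rwa [hx1] at this
      have h2 : 2 / (1 - ⟪v, x⟫) ≤ 2 := by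
        rw [div_le_iff₀ (by linarith)]
        linarith
      have h3 : 0 ≤ 2 / (1 - ⟪v, x⟫) := div_nonneg (by norm_num) (by linarith)
      rw [mem_closedBall_zero_iff, stereoToFun_apply, norm_smul, innerSL_apply_apply,
        Real.norm_of_nonneg h3]
      nlinarith [norm_nonneg ((ℝ ∙ v)ᗮ.orthogonalProjectionOnto x)]
    · have hne : x ≠ v := by
        rintro rfl
        rw [real_inner_self_eq_norm_sq, hv] at hvx
        norm_num at hvx
      exact congrArg Subtype.val (stereo_left_inv hv (x := ⟨x, hx⟩) hne)
  have hball : μH[(k : ℝ)] (closedBall (0 : (ℝ ∙ v)ᗮ) 2) < ⊤ := by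
    rw [← hfin]
    exact hcpt.measure_lt_top
  calc μH[(k : ℝ)] {x ∈ sphere (0 : E) 1 | ⟪v, x⟫ ≤ 0}
      ≤ μH[(k : ℝ)] (F '' closedBall 0 2) := measure_mono hsub
    _ ≤ (K : ENNReal) ^ (k : ℝ) * μH[(k : ℝ)] (closedBall (0 : (ℝ ∙ v)ᗮ) 2) :=
        hK.hausdorffMeasure_image_le (by positivity)
    _ < ⊤ := ENNReal.mul_lt_top (by simp) hball

open Metric Module in
theorem hausdorffMeasure_sphere_lt_top {E : Type*} [NormedAddCommGroup E]
    [InnerProductSpace ℝ E] [FiniteDimensional ℝ E] [MeasurableSpace E] [BorelSpace E]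
    {k : ℕ} (hk : finrank ℝ E = k + 1) : μH[(k : ℝ)] (sphere (0 : E) 1) < ⊤ := by
  have : Nontrivial E := nontrivial_of_finrank_eq_succ hk
  obtain ⟨v, hv⟩ := exists_norm_eq E zero_le_one
  have hsub : sphere (0 : E) 1 ⊆ {x ∈ sphere (0 : E) 1 | ⟪v, x⟫ ≤ 0} ∪
      {x ∈ sphere (0 : E) 1 | ⟪-v, x⟫ ≤ 0} := by
    intro x hx
    rcases le_total ⟪v, x⟫ 0 with h | h
    · exact Or.inl ⟨hx, h⟩
    · exact Or.inr ⟨hx, by simpa [inner_neg_left] using h⟩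
  exact (measure_mono hsub).trans_lt (measure_union_lt_top
    (hausdorffMeasure_hemisphere_lt_top hk hv)
    (hausdorffMeasure_hemisphere_lt_top hk (by rwa [norm_neg])))

open Metric Module in
/-- The orthogonal projection onto a hyperplane does not increase Hausdorff measure and maps the
unit sphere onto a set containing the unit ball of that hyperplane. -/
theorem hausdorffMeasure_sphere_pos {E : Type*} [NormedAddCommGroup E]
    [InnerProductSpace ℝ E] [FiniteDimensional ℝ E] [MeasurableSpace E] [BorelSpace E]
    {k : ℕ} (hk : finrank ℝ E = k + 1) : 0 < μH[(k : ℝ)] (sphere (0 : E) 1) := by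
  have : Nontrivial E := nontrivial_of_finrank_eq_succ hk
  obtain ⟨v, hv⟩ := exists_norm_eq E zero_le_one
  have hfin : finrank ℝ (ℝ ∙ v)ᗮ = k := by
    have := Submodule.finrank_add_finrank_orthogonal (ℝ ∙ v)
    rw [finrank_span_singleton (by rintro rfl; simp at hv), hk] at this
    omega
  have hsub : ball (0 : (ℝ ∙ v)ᗮ) 1 ⊆ (ℝ ∙ v)ᗮ.orthogonalProjectionOnto '' sphere (0 : E) 1 := by
    intro y hy
    have hy1 : ‖(y : E)‖ < 1 := by simpa using hy
    have hort : ⟪(y : E), v⟫ = 0 := Submodule.mem_orthogonal_singleton_iff_inner_left.mp y.2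
    refine ⟨y + √(1 - ‖(y : E)‖ ^ 2) • v, ?_, ?_⟩
    · have h0 : 0 ≤ 1 - ‖(y : E)‖ ^ 2 := by nlinarith [norm_nonneg (y : E)]
      have : ‖(y : E) + √(1 - ‖(y : E)‖ ^ 2) • v‖ ^ 2 = 1 := by
        rw [norm_add_sq_real, inner_smul_right, hort, norm_smul, hv, mul_one,
          Real.norm_of_nonneg (Real.sqrt_nonneg _), Real.sq_sqrt h0]
        ring
      rw [mem_sphere_zero_iff_norm]
      exact (pow_eq_one_iff_of_nonneg (norm_nonneg _) two_ne_zero).mp this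
    · have hv0 : (ℝ ∙ v)ᗮ.orthogonalProjectionOnto v = 0 :=
        Submodule.orthogonalProjectionOnto_orthogonalComplement_singleton_eq_zero v
      rw [map_add, map_smul, hv0, smul_zero, add_zero]
      exact Submodule.orthogonalProjectionOnto_mem_subspace_eq_self y
  have hball : 0 < μH[(k : ℝ)] (ball (0 : (ℝ ∙ v)ᗮ) 1) := by
    rw [← hfin]
    exact measure_ball_pos _ _ one_pos
  refine hball.trans_le ((measure_mono hsub).trans ?_)
  have hlip : LipschitzWith 1 (ℝ ∙ v)ᗮ.orthogonalProjectionOnto :=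
    (ℝ ∙ v)ᗮ.lipschitzWith_orthogonalProjectionOnto
  simpa using hlip.hausdorffMeasure_image_le (Nat.cast_nonneg k) (sphere (0 : E) 1)

/-- `(n-1)`-dimensional Hausdorff measure concentrated on the unit sphere of `ℝ^n`. -/
def sphMeasure (n : ℕ) : Measure (EuclideanSpace ℝ (Fin n)) :=
  (μH[(n : ℝ) - 1]).restrict (Metric.sphere 0 1)

theorem isFiniteMeasure_sphMeasure {n : ℕ} (hn : 1 ≤ n) : IsFiniteMeasure (sphMeasure n) := by
  obtain ⟨k, rfl⟩ := Nat.exists_eq_add_of_le' hn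
  refine ⟨?_⟩
  have := hausdorffMeasure_sphere_lt_top (E := EuclideanSpace ℝ (Fin (k + 1))) (k := k) (by simp)
  simpa [sphMeasure] using this

theorem sphMeasure_real_univ_pos {n : ℕ} (hn : 1 ≤ n) : 0 < (sphMeasure n).real Set.univ := by
  have := isFiniteMeasure_sphMeasure hn
  obtain ⟨k, rfl⟩ := Nat.exists_eq_add_of_le' hn
  refine ENNReal.toReal_pos ?_ (measure_ne_top _ _)
  have := hausdorffMeasure_sphere_pos (E := EuclideanSpace ℝ (Fin (k + 1))) (k := k) (by simp)
  simpa [sphMeasure] using this.ne'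

theorem integrable_sphMeasure {n : ℕ} (hn : 1 ≤ n) {f : EuclideanSpace ℝ (Fin n) → ℝ}
    (hf : Continuous f) : Integrable f (sphMeasure n) := by
  have := isFiniteMeasure_sphMeasure hn
  have h : (sphMeasure n).restrict (Metric.sphere 0 1) = sphMeasure n := by
    rw [sphMeasure, Measure.restrict_restrict Metric.isClosed_sphere.measurableSet, Set.inter_self]
  rw [← h]
  exact hf.continuousOn.integrableOn_compact (isCompact_sphere _ _)

theorem measurePreserving_sphMeasure {n : ℕ}
    (e : EuclideanSpace ℝ (Fin n) ≃ₗᵢ[ℝ] EuclideanSpace ℝ (Fin n)) :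
    MeasurePreserving e (sphMeasure n) (sphMeasure n) := by
  have h := (e.toIsometryEquiv.measurePreserving_hausdorffMeasure
    ((n : ℝ) - 1)).restrict_preimage (s := Metric.sphere 0 1)
    Metric.isClosed_sphere.measurableSet
  have hs : e.toIsometryEquiv ⁻¹' Metric.sphere 0 1 = Metric.sphere 0 1 := by
    ext x; simp
  rw [hs] at h
  exact h

/-- Rotation invariance of the moments: a reflection carries `v` to `‖v‖ • e`. -/
theorem integral_inner_pow {n : ℕ} {e : EuclideanSpace ℝ (Fin n)} (he : ‖e‖ = 1)
    (v : EuclideanSpace ℝ (Fin n)) (p : ℕ) :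
    ∫ x, ⟪v, x⟫ ^ p ∂sphMeasure n = ‖v‖ ^ p * ∫ x, ⟪e, x⟫ ^ p ∂sphMeasure n := by
  set R := (ℝ ∙ (v - ‖v‖ • e))ᗮ.reflection
  have hR : R v = ‖v‖ • e := Submodule.reflection_sub (by simp [norm_smul, he])
  have h := (measurePreserving_sphMeasure R).integral_comp
    R.toHomeomorph.measurableEmbedding (fun x => ⟪‖v‖ • e, x⟫ ^ p)
  have hinv : ∀ x, ⟪‖v‖ • e, R x⟫ = ⟪v, x⟫ := fun x => by
    rw [← hR, LinearIsometryEquiv.inner_map_map]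
  simp only [hinv] at h
  rw [h, ← integral_const_mul]
  simp only [real_inner_smul_left, mul_pow]

/-- For orthonormal `e, f`, the moment `∫ (⟪e, x⟫ + u ⟪f, x⟫) ^ (2m+2)` equals
`(1 + u²) ^ (m+1) ∫ ⟪e, x⟫ ^ (2m+2)` for every real `u`; the identity is the equality of the
coefficients of `u²`. -/
theorem integral_mixed_moment {n : ℕ} (hn : 1 ≤ n) {i j : Fin n} (hij : i ≠ j) (m : ℕ) :
    (2 * m + 1) * ∫ x, x i ^ (2 * m) * x j ^ 2 ∂sphMeasure n =
      ∫ x, x i ^ (2 * m + 2) ∂sphMeasure n := by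
  set M := ∫ x, x i ^ (2 * m + 2) ∂sphMeasure n
  set A : ℕ → ℝ := fun q => ∫ x, x j ^ q * x i ^ (2 * m + 2 - q) ∂sphMeasure n with hA
  have hu : ∀ u : ℝ, ∑ q ∈ Finset.range (2 * m + 2 + 1),
      u ^ q * ((2 * m + 2).choose q * A q) = (1 + u ^ 2) ^ (m + 1) * M := by
    intro u
    set e : EuclideanSpace ℝ (Fin n) := EuclideanSpace.single i 1
    set v : EuclideanSpace ℝ (Fin n) := e + u • EuclideanSpace.single j 1
    have he : ∀ x, ⟪e, x⟫ = x i := fun x => by simp [e, EuclideanSpace.inner_single_left]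
    have hv : ∀ x, ⟪v, x⟫ = u * x j + x i := fun x => by
      simp [v, inner_add_left, he, real_inner_smul_left, EuclideanSpace.inner_single_left, add_comm]
    have hnorm : ‖v‖ ^ 2 = 1 + u ^ 2 := by
      rw [← real_inner_self_eq_norm_sq, hv]
      simp [v, e, hij, hij.symm]
      ring
    have h := integral_inner_pow (e := e) (by simp [e]) v (2 * m + 2)
    simp only [he, hv] at h
    rw [← hnorm, ← pow_mul, show 2 * (m + 1) = 2 * m + 2 by ring, ← h]
    simp only [add_pow]
    rw [integral_finsetSum _ fun q _ => integrable_sphMeasure hn (by fun_prop)]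
    refine Finset.sum_congr rfl fun q _ => ?_
    rw [hA, ← integral_const_mul, ← integral_const_mul]
    congr 1 with x
    ring
  have hpoly : ∑ q ∈ Finset.range (2 * m + 2 + 1),
      (Polynomial.X : Polynomial ℝ) ^ q * Polynomial.C ((2 * m + 2).choose q * A q) =
        Polynomial.expand ℝ 2 ((1 + Polynomial.X) ^ (m + 1)) * Polynomial.C M := by
    refine Polynomial.funext fun u => ?_
    simpa [Polynomial.eval_finsetSum] using hu u
  have hc := congrArg (fun P => Polynomial.coeff P (1 * 2)) hpoly
  simp only [Polynomial.coeff_mul_C, Polynomial.coeff_expand_mul two_pos,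
    Polynomial.coeff_one_add_X_pow, Polynomial.finsetSum_coeff, Polynomial.coeff_X_pow] at hc
  have h2 : (((2 * m + 2).choose 2 : ℕ) : ℝ) = (m + 1) * (2 * m + 1) := by
    rw [Nat.cast_choose_two]
    push_cast
    ring
  have hA2 : A 2 = ∫ x, x i ^ (2 * m) * x j ^ 2 ∂sphMeasure n := by
    simp only [hA, Nat.add_sub_cancel, mul_comm]
  rw [Finset.sum_eq_single 2 (by intro q _ hq; simp [hq.symm]) (by simp)] at hc
  simp only [one_mul, if_true, h2, Nat.choose_one_right, hA2] at hc
  have hm : (m : ℝ) + 1 ≠ 0 := by positivity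
  refine mul_left_cancel₀ hm ?_
  push_cast at hc
  linear_combination hc

/-- The moment recursion, from `∑ j, x j ^ 2 = 1` on the sphere. -/
theorem moment_recursion {n : ℕ} (hn : 1 ≤ n) (i : Fin n) (m : ℕ) :
    (2 * m + 1) * ∫ x, x i ^ (2 * m) ∂sphMeasure n =
      (n + 2 * m) * ∫ x, x i ^ (2 * m + 2) ∂sphMeasure n := by
  have hsum : ∫ x, x i ^ (2 * m) ∂sphMeasure n =
      ∑ j, ∫ x, x i ^ (2 * m) * x j ^ 2 ∂sphMeasure n := by
    rw [← integral_finsetSum _ fun q _ => integrable_sphMeasure hn (by fun_prop)]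
    refine setIntegral_congr_fun Metric.isClosed_sphere.measurableSet fun x hx => ?_
    have hx1 : ∑ j, x j ^ 2 = 1 := by
      rw [← EuclideanSpace.real_norm_sq_eq, mem_sphere_zero_iff_norm.mp hx, one_pow]
    simp only [← Finset.mul_sum, hx1, mul_one]
  rw [hsum, Finset.mul_sum, ← Finset.add_sum_erase _ _ (Finset.mem_univ i),
    Finset.sum_congr rfl fun j hj =>
      integral_mixed_moment hn (Finset.ne_of_mem_erase hj).symm m]
  simp only [← pow_add, Finset.sum_const, Finset.card_erase_of_mem (Finset.mem_univ i),
    Finset.card_univ, Fintype.card_fin, nsmul_eq_mul, Nat.cast_sub hn, Nat.cast_one]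
  ring

/-- For `Σ = S^{n-1}` with `n ≥ 3` and `ψ` as in the paper,
`∫_Σ ψ x_n⁶ dσ = ( -(n+6)/7 + (n-1)/2 + 3(n-1)(n+1)/(8(n+8))
  + 33(n-1)(n+1)(n+3)/(80(n+8)(n+10)) ) ∫_Σ x_n⁸ dσ`, and this quantity is strictly
positive. -/
theorem stmt_4 (n : ℕ) (hn : 3 ≤ n) :
    (∫ x in Metric.sphere (0 : EuclideanSpace ℝ (Fin n)) 1,
        (-1 + (((n : ℝ) - 1) / 2) * (x ⟨n - 1, by omega⟩) ^ 2
          + (((n : ℝ) - 1) * ((n : ℝ) + 1) / 24) * (x ⟨n - 1, by omega⟩) ^ 4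
          + (((n : ℝ) - 1) * ((n : ℝ) + 1) * ((n : ℝ) + 3) / 240) * (x ⟨n - 1, by omega⟩) ^ 6)
          * (x ⟨n - 1, by omega⟩) ^ 6 ∂(μH[(n : ℝ) - 1]))
      = (-((n : ℝ) + 6) / 7 + ((n : ℝ) - 1) / 2
          + 3 * ((n : ℝ) - 1) * ((n : ℝ) + 1) / (8 * ((n : ℝ) + 8))
          + 33 * ((n : ℝ) - 1) * ((n : ℝ) + 1) * ((n : ℝ) + 3) /
              (80 * ((n : ℝ) + 8) * ((n : ℝ) + 10))) *
        ∫ x in Metric.sphere (0 : EuclideanSpace ℝ (Fin n)) 1,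
          (x ⟨n - 1, by omega⟩) ^ 8 ∂(μH[(n : ℝ) - 1])
    ∧ 0 < ∫ x in Metric.sphere (0 : EuclideanSpace ℝ (Fin n)) 1,
        (-1 + (((n : ℝ) - 1) / 2) * (x ⟨n - 1, by omega⟩) ^ 2
          + (((n : ℝ) - 1) * ((n : ℝ) + 1) / 24) * (x ⟨n - 1, by omega⟩) ^ 4
          + (((n : ℝ) - 1) * ((n : ℝ) + 1) * ((n : ℝ) + 3) / 240) * (x ⟨n - 1, by omega⟩) ^ 6)
          * (x ⟨n - 1, by omega⟩) ^ 6 ∂(μH[(n : ℝ) - 1]) := by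
  have hn1 : 1 ≤ n := by omega
  set i : Fin n := ⟨n - 1, by omega⟩
  have hnR : (3 : ℝ) ≤ n := by exact_mod_cast hn
  set c : ℝ := -((n : ℝ) + 6) / 7 + ((n : ℝ) - 1) / 2
          + 3 * ((n : ℝ) - 1) * ((n : ℝ) + 1) / (8 * ((n : ℝ) + 8))
          + 33 * ((n : ℝ) - 1) * ((n : ℝ) + 1) * ((n : ℝ) + 3) /
              (80 * ((n : ℝ) + 8) * ((n : ℝ) + 10)) with hc
  set M : ℕ → ℝ := fun p => ∫ x, x i ^ p ∂sphMeasure n with hM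
  have r0 := moment_recursion hn1 i 0
  have r2 := moment_recursion hn1 i 1
  have r4 := moment_recursion hn1 i 2
  have r6 := moment_recursion hn1 i 3
  have r8 := moment_recursion hn1 i 4
  have r10 := moment_recursion hn1 i 5
  norm_num at r0 r2 r4 r6 r8 r10
  -- By the recursion, the total mass is a positive multiple of the eighth moment.
  have hM8 : 0 < M 8 := by
    have h0 := sphMeasure_real_univ_pos hn1
    have : 105 * (sphMeasure n).real Set.univ = n * (n + 2) * (n + 4) * (n + 6) * M 8 := by
      linear_combination 105 * r0 + 35 * n * r2 + 7 * n * (n + 2) * r4 +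
        n * (n + 2) * (n + 4) * r6
    refine pos_of_mul_pos_right (a := (n : ℝ) * (n + 2) * (n + 4) * (n + 6)) ?_ (by positivity)
    rw [← this]
    positivity
  have hcomb : ∀ a b d e : ℝ, ∫ x, (a * x i ^ 6 + b * x i ^ 8 + d * x i ^ 10 + e * x i ^ 12)
      ∂sphMeasure n = a * M 6 + b * M 8 + d * M 10 + e * M 12 := by
    intro a b d e
    rw [integral_add, integral_add, integral_add]
    · simp only [hM, integral_const_mul]
    all_goals exact integrable_sphMeasure hn1 (by fun_prop)
  have hexp : ∫ x, (-1 + (((n : ℝ) - 1) / 2) * (x i) ^ 2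
          + (((n : ℝ) - 1) * ((n : ℝ) + 1) / 24) * (x i) ^ 4
          + (((n : ℝ) - 1) * ((n : ℝ) + 1) * ((n : ℝ) + 3) / 240) * (x i) ^ 6)
          * (x i) ^ 6 ∂sphMeasure n = -M 6 + (((n : ℝ) - 1) / 2) * M 8
          + (((n : ℝ) - 1) * ((n : ℝ) + 1) / 24) * M 10
          + (((n : ℝ) - 1) * ((n : ℝ) + 1) * ((n : ℝ) + 3) / 240) * M 12 := by
    rw [← neg_one_mul (M 6), ← hcomb]
    congr 1 with x
    ring
  have h6 : M 6 = (n + 6) / 7 * M 8 := by linear_combination r6 / 7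
  have h10 : M 10 = 9 / (n + 8) * M 8 := by
    field_simp
    linear_combination -r8
  have h12 : M 12 = 99 / ((n + 8) * (n + 10)) * M 8 := by
    have : M 12 = 11 / (n + 10) * M 10 := by
      field_simp
      linear_combination -r10
    rw [this, h10]
    field_simp
    norm_num
  have hval : -M 6 + (((n : ℝ) - 1) / 2) * M 8
          + (((n : ℝ) - 1) * ((n : ℝ) + 1) / 24) * M 10
          + (((n : ℝ) - 1) * ((n : ℝ) + 1) * ((n : ℝ) + 3) / 240) * M 12 = c * M 8 := by
    rw [h6, h10, h12, hc]
    field_simp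
    ring
  -- In terms of `t = n - 3` the numerator of `c` has only positive coefficients.
  have hcpos : 0 < c := by
    obtain ⟨t, ht⟩ : ∃ t : ℝ, (n : ℝ) = t + 3 := ⟨n - 3, by ring⟩
    have ht0 : 0 ≤ t := by linarith
    have : c = (641 * t ^ 3 + 11402 * t ^ 2 + 52984 * t + 10048) /
        (560 * (t + 11) * (t + 13)) := by
      rw [hc, ht, show t + 3 + 8 = t + 11 by ring, show t + 3 + 10 = t + 13 by ring]
      field_simp
      ring
    rw [this]
    positivity
  have hmain := hexp.trans hval
  exact ⟨hmain, (mul_pos hcpos hM8).trans_eq hmain.symm⟩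
end
end

section
/- Let Σ = S^{n-1} with n ≥ 3. There exists a smooth function η : Σ → ℝ such that Δ_Σ η + (n-1) η < 0 at every point of Σ and ∫_Σ (|∇_Σ η|^2 - (n-1) η^2) dσ > 0. -/
/-!
Write `t = x_i` for one fixed coordinate. On zonal functions `L = Δ_Σ + (n - 1)` acts on powers of
`t` by `-L t ^ k = (k - 1) ((k + n - 1) t ^ k - k t ^ (k - 2))`, so there is an explicit even
polynomial `ψ` of degree six with `-L ψ = t ^ 6`. The function `η = ψ - c` with `c > 0` then
satisfies `-L η = t ^ 6 + (n - 1) c > 0` everywhere on the sphere. Since `L` is self-adjoint, the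
energy of `η` is `-∫ η L η`; at `c = 0` it equals `∫ ψ t ^ 6`, which is an explicit combination of
the moments `∫ t ^ k`, `k = 6, 8, 10, 12`, and turns out to be positive for every `n ≥ 3`
(`bracket_pos`). By continuity the energy stays positive for small `c > 0`.

The two operators are computed from their extrinsic definitions in `sphGradient_zonal` and
`sphLaplacian_zonal`. All that is needed about the Hausdorff measure `σ` of the sphere is that it is
finite and nonzero (Lipschitz comparison with Lebesgue measure, `surf_univ`) and invariant under
isometries. Invariance under reflections shows that `∫ ⟪w, x⟫ ^ k dσ` depends on `‖w‖` only;
expanding this for `w = e_i + s e_j` gives the moment recursion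
`(n + k) ∫ t ^ (k + 2) = (k + 1) ∫ t ^ k` for even `k` (`mom_rec`), which also replaces integration
by parts on the sphere.
-/

open MeasureTheory
open scoped RealInnerProductSpace

noncomputable section

/-! ### The Hausdorff measure of the sphere is finite and nonzero -/

/-- The radial projection onto the unit sphere is Lipschitz outside the open unit ball. -/
lemma lipschitzOnWith_normalize {m : ℕ} :
    LipschitzOnWith 2 (fun y : EuclideanSpace ℝ (Fin m) => ‖y‖⁻¹ • y) {y | 1 ≤ ‖y‖} := by
  refine LipschitzOnWith.of_dist_le_mul fun a ha b hb => ?_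
  have ha' : 1 ≤ ‖a‖ := ha
  have hb' : 1 ≤ ‖b‖ := hb
  have ha0 : ‖a‖ ≠ 0 := by positivity
  have hb0 : ‖b‖ ≠ 0 := by positivity
  have key : ‖a‖⁻¹ • a - ‖b‖⁻¹ • b
      = ‖a‖⁻¹ • (a - b) + (‖a‖⁻¹ * (‖b‖ - ‖a‖)) • (‖b‖⁻¹ • b) := by
    rw [smul_smul, smul_sub, mul_sub, inv_mul_cancel₀ ha0, sub_mul, mul_assoc,
      mul_inv_cancel₀ hb0, mul_one, one_mul, sub_smul]
    abel
  have hinv : ‖a‖⁻¹ ≤ 1 := inv_le_one_of_one_le₀ ha'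
  have h1 : ‖‖a‖⁻¹ • (a - b)‖ ≤ ‖a - b‖ := by
    rw [norm_smul, norm_inv, norm_norm]
    exact mul_le_of_le_one_left (norm_nonneg _) hinv
  have h2 : ‖(‖a‖⁻¹ * (‖b‖ - ‖a‖)) • (‖b‖⁻¹ • b)‖ ≤ ‖a - b‖ := by
    rw [norm_smul, norm_smul, norm_inv, norm_norm, inv_mul_cancel₀ hb0, mul_one, norm_mul, norm_inv,
      norm_norm, Real.norm_eq_abs, abs_sub_comm]
    calc _ ≤ |‖a‖ - ‖b‖| := mul_le_of_le_one_left (abs_nonneg _) hinv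
      _ ≤ _ := abs_norm_sub_norm_le a b
  rw [dist_eq_norm, dist_eq_norm, key]
  refine (norm_add_le _ _).trans ?_
  push_cast
  linarith

/-- The affine parametrisation of the hyperplane `y i = c` in `ℝ^(m+1)` by `ℝ^m`. The domain
carries the sup norm, for which the `m`-dimensional Hausdorff measure is Lebesgue measure. -/
def faceMap {m : ℕ} (i : Fin (m + 1)) (c : ℝ) (z : Fin m → ℝ) : EuclideanSpace ℝ (Fin (m + 1)) :=
  WithLp.toLp 2 (i.insertNth c z : Fin (m + 1) → ℝ)

lemma lipschitzWith_faceMap {m : ℕ} (i : Fin (m + 1)) (c : ℝ) :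
    ∃ K, LipschitzWith K (faceMap i c) := by
  have h : LipschitzWith 1 (fun z : Fin m → ℝ => (i.insertNth c z : Fin (m + 1) → ℝ)) := by
    refine LipschitzWith.of_dist_le_mul fun a b => ?_
    rw [NNReal.coe_one, one_mul, dist_pi_le_iff dist_nonneg]
    intro j
    refine Fin.succAboveCases i ?_ (fun k => ?_) j
    · simp
    · simpa using dist_le_pi_dist a b k
  exact ⟨_, (PiLp.lipschitzWith_toLp 2 (fun _ : Fin (m + 1) => ℝ)).comp h⟩

lemma one_le_norm_faceMap {m : ℕ} (i : Fin (m + 1)) {c : ℝ} (hc : |c| = 1) (z : Fin m → ℝ) :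
    1 ≤ ‖faceMap i c z‖ := by
  have := PiLp.norm_apply_le (faceMap i c z) i
  simpa [faceMap, hc] using this

/-- Dividing a point of the sphere by its largest coordinate in absolute value puts it on a face of
the cube `[-1, 1] ^ (m + 1)`, so the sphere is covered by the radial projections of the faces. -/
lemma sphere_subset_faces (m : ℕ) :
    Metric.sphere (0 : EuclideanSpace ℝ (Fin (m + 1))) 1 ⊆
      ⋃ i : Fin (m + 1), ⋃ c ∈ ({1, -1} : Finset ℝ),
        (fun y : EuclideanSpace ℝ (Fin (m + 1)) => ‖y‖⁻¹ • y) ''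
          (faceMap i c '' Set.Icc (fun _ => -1) (fun _ => 1)) := by
  intro x hx
  have hx1 : ‖x‖ = 1 := by simpa using hx
  obtain ⟨i, hi⟩ := Finite.exists_max (fun i => |x i|)
  have hpos : 0 < |x i| := by
    by_contra h
    have h0 : ∀ j, x j = 0 := fun j => abs_nonpos_iff.1 ((hi j).trans (not_lt.1 h))
    have : x = 0 := by ext j; simpa using h0 j
    simp [this] at hx1
  simp only [Set.mem_iUnion]
  refine ⟨i, |x i|⁻¹ * x i, ?_, |x i|⁻¹ • x, ⟨fun k => |x i|⁻¹ * x (i.succAbove k), ?_, ?_⟩, ?_⟩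
  · rcases abs_cases (x i) with ⟨h, _⟩ | ⟨h, _⟩
    · rw [h, inv_mul_cancel₀ (by rw [← h]; exact hpos.ne')]; simp
    · have : x i ≠ 0 := abs_pos.1 hpos
      rw [h, inv_neg, neg_mul, inv_mul_cancel₀ this]; simp
  · have : ∀ k, |(|x i|⁻¹ * x (i.succAbove k))| ≤ 1 := fun k => by
      rw [abs_mul, abs_inv, abs_abs, inv_mul_le_iff₀ hpos, mul_one]; exact hi _
    exact ⟨fun k => (abs_le.1 (this k)).1, fun k => (abs_le.1 (this k)).2⟩
  · ext j
    refine Fin.succAboveCases i ?_ (fun k => ?_) j <;> simp [faceMap]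
  · simp only [norm_smul, norm_inv, Real.norm_eq_abs, abs_abs, hx1, mul_one, inv_inv, smul_smul]
    rw [mul_inv_cancel₀ hpos.ne', one_smul]

lemma volume_eq_hausdorff (m : ℕ) :
    (μH[((m + 1 : ℕ) : ℝ) - 1] : Measure (Fin m → ℝ)) = volume := by
  have := hausdorffMeasure_pi_real (ι := Fin m)
  simpa using this

lemma hausdorff_sphere_lt_top (m : ℕ) :
    μH[((m + 1 : ℕ) : ℝ) - 1] (Metric.sphere (0 : EuclideanSpace ℝ (Fin (m + 1))) 1) < ⊤ := by
  have hd : (0 : ℝ) ≤ ((m + 1 : ℕ) : ℝ) - 1 := by simp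
  refine (measure_mono (sphere_subset_faces m)).trans_lt ?_
  refine (measure_iUnion_fintype_le _ _).trans_lt (ENNReal.sum_lt_top.2 fun i _ => ?_)
  refine (measure_biUnion_finset_le _ _).trans_lt (ENNReal.sum_lt_top.2 fun c hc => ?_)
  have hc1 : |c| = 1 := by
    simp only [Finset.mem_insert, Finset.mem_singleton] at hc
    rcases hc with rfl | rfl <;> simp
  obtain ⟨K, hK⟩ := lipschitzWith_faceMap i c
  have hN := lipschitzOnWith_normalize (m := m + 1)
  refine ((hN.mono ?_).hausdorffMeasure_image_le hd).trans_lt ?_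
  · rintro _ ⟨z, -, rfl⟩
    exact one_le_norm_faceMap i hc1 z
  refine ENNReal.mul_lt_top (ENNReal.rpow_lt_top_of_nonneg hd ENNReal.coe_ne_top) ?_
  refine (hK.hausdorffMeasure_image_le hd _).trans_lt ?_
  refine ENNReal.mul_lt_top (ENNReal.rpow_lt_top_of_nonneg hd ENNReal.coe_ne_top) ?_
  rw [volume_eq_hausdorff]
  exact isCompact_Icc.measure_lt_top

/-- Forgetting one coordinate is `1`-Lipschitz and maps the sphere onto a set with nonempty
interior in `ℝ^m`. -/
lemma hausdorff_sphere_pos (m : ℕ) :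
    0 < μH[((m + 1 : ℕ) : ℝ) - 1] (Metric.sphere (0 : EuclideanSpace ℝ (Fin (m + 1))) 1) := by
  have hd : (0 : ℝ) ≤ ((m + 1 : ℕ) : ℝ) - 1 := by simp
  let π : EuclideanSpace ℝ (Fin (m + 1)) → (Fin m → ℝ) := fun x k => x k.succ
  have hπ : LipschitzWith 1 π := by
    refine LipschitzWith.of_dist_le_mul fun a b => ?_
    rw [NNReal.coe_one, one_mul, dist_pi_le_iff dist_nonneg]
    intro k
    rw [dist_eq_norm a b]
    exact PiLp.norm_apply_le (a - b) k.succ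
  have hopen : IsOpen {z : Fin m → ℝ | ∑ k, z k ^ 2 < 1} :=
    isOpen_lt (by fun_prop) continuous_const
  have hsub : {z : Fin m → ℝ | ∑ k, z k ^ 2 < 1} ⊆
      π '' Metric.sphere (0 : EuclideanSpace ℝ (Fin (m + 1))) 1 := by
    intro z hz
    have hz' : ∑ k, z k ^ 2 < 1 := hz
    refine ⟨faceMap 0 (√(1 - ∑ k, z k ^ 2)) z, ?_, ?_⟩
    · rw [mem_sphere_zero_iff_norm, EuclideanSpace.norm_eq, Fin.sum_univ_succ]
      simp [faceMap, Real.sq_sqrt (sub_nonneg.2 hz'.le)]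
    · ext k
      simp [π, faceMap]
  have h1 := hπ.hausdorffMeasure_image_le hd (Metric.sphere 0 1)
  have h2 := hopen.measure_pos volume ⟨0, by simp⟩
  rw [← volume_eq_hausdorff] at h2
  have h3 := h2.trans_le ((measure_mono hsub).trans h1)
  simpa using h3

/-- The surface measure `σ` on the unit sphere of `ℝ^n`: the restriction of the
`(n-1)`-dimensional Hausdorff measure. -/
abbrev surf (n : ℕ) : Measure (EuclideanSpace ℝ (Fin n)) :=
  (μH[(n : ℝ) - 1]).restrict (Metric.sphere (0 : EuclideanSpace ℝ (Fin n)) 1)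

lemma surf_univ {n : ℕ} (hn : 1 ≤ n) : 0 < surf n Set.univ ∧ surf n Set.univ < ⊤ := by
  obtain ⟨m, rfl⟩ := Nat.exists_eq_add_of_le' hn
  rw [Measure.restrict_apply_univ]
  exact ⟨hausdorff_sphere_pos m, hausdorff_sphere_lt_top m⟩

lemma integrable_surf {n : ℕ} (hn : 1 ≤ n) {f : EuclideanSpace ℝ (Fin n) → ℝ}
    (hf : Continuous f) : Integrable f (surf n) := by
  obtain ⟨C, hC⟩ := (isCompact_sphere (0 : EuclideanSpace ℝ (Fin n)) 1).exists_bound_of_continuousOn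
    hf.continuousOn
  have := (surf_univ hn).2
  rw [Measure.restrict_apply_univ] at this
  exact Measure.integrableOn_of_bounded this.ne hf.aestronglyMeasurable
    ((ae_restrict_iff' Metric.isClosed_sphere.measurableSet).2 (.of_forall hC))

/-- The surface measure is invariant under linear isometries. -/
lemma integral_surf_comp {n : ℕ}
    (L : EuclideanSpace ℝ (Fin n) ≃ₗᵢ[ℝ] EuclideanSpace ℝ (Fin n))
    (f : EuclideanSpace ℝ (Fin n) → ℝ) :
    ∫ x, f (L x) ∂surf n = ∫ x, f x ∂surf n := by
  have h := (L.toIsometryEquiv.measurePreserving_hausdorffMeasure ((n : ℝ) - 1)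
    ).setIntegral_preimage_emb L.toHomeomorph.measurableEmbedding f (Metric.sphere 0 1)
  have hpre : L.toIsometryEquiv ⁻¹' Metric.sphere 0 1 = Metric.sphere 0 1 := by
    ext x; simp
  rw [hpre] at h
  exact h

/-! ### Moments of coordinates -/

/-- Any two vectors of equal norm are exchanged by a reflection, so the moments of the linear
functional `⟪w, ·⟫` on the sphere depend on `‖w‖` only. -/
lemma integral_inner_pow_eq {n : ℕ} {v w : EuclideanSpace ℝ (Fin n)} (h : ‖v‖ = ‖w‖) (k : ℕ) :
    ∫ x, ⟪v, x⟫ ^ k ∂surf n = ∫ x, ⟪w, x⟫ ^ k ∂surf n := by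
  have hL := Submodule.reflection_sub h
  set L := (ℝ ∙ (v - w))ᗮ.reflection
  rw [← integral_surf_comp L (fun x => ⟪w, x⟫ ^ k), ← hL]
  simp only [LinearIsometryEquiv.inner_map_map]

/-- The `k`-th moment `∫ x_i ^ k dσ` of a coordinate on the sphere. -/
def mom (n : ℕ) (i : Fin n) (k : ℕ) : ℝ := ∫ x, x i ^ k ∂surf n

/-- `e_i + s e_j` has the norm of `√(1 + s ^ 2) e_i`, so the two linear functionals have the same
moments. -/
lemma integral_add_mul_pow {n : ℕ} {i j : Fin n} (hij : i ≠ j) (r : ℕ) (s : ℝ) :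
    ∫ x, (x i + s * x j) ^ (2 * r) ∂surf n = (1 + s ^ 2) ^ r * mom n i (2 * r) := by
  have hn : ‖EuclideanSpace.single i (1 : ℝ) + s • EuclideanSpace.single j (1 : ℝ)‖
      = ‖(√(1 + s ^ 2)) • EuclideanSpace.single i (1 : ℝ)‖ := by
    have h0 : (0 : ℝ) ≤ 1 + s ^ 2 := by positivity
    rw [norm_smul, PiLp.norm_single, norm_one, mul_one, Real.norm_eq_abs,
      abs_of_nonneg (Real.sqrt_nonneg _), ← Real.sqrt_sq (norm_nonneg (_ + _)),
      norm_add_sq_real]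
    congr 1
    simp [norm_smul, inner_smul_right, EuclideanSpace.inner_single_left, hij]
  have h := integral_inner_pow_eq hn (2 * r)
  have e : ∀ x : EuclideanSpace ℝ (Fin n),
      ⟪EuclideanSpace.single i (1 : ℝ) + s • EuclideanSpace.single j (1 : ℝ), x⟫
        = x i + s * x j := fun x => by
    simp [inner_add_left, inner_smul_left, EuclideanSpace.inner_single_left]
  have e' : ∀ x : EuclideanSpace ℝ (Fin n),
      ⟪√(1 + s ^ 2) • EuclideanSpace.single i (1 : ℝ), x⟫ ^ (2 * r)
        = (1 + s ^ 2) ^ r * x i ^ (2 * r) := fun x => by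
    rw [inner_smul_left, EuclideanSpace.inner_single_left, mul_pow, pow_mul]
    simp [Real.sq_sqrt (show (0 : ℝ) ≤ 1 + s ^ 2 by positivity)]
  simp only [e, e', integral_const_mul] at h
  exact h

/-- Comparing the coefficients of `s ^ 2` in `integral_add_mul_pow`. -/
lemma mixed_moment {n : ℕ} (hn : 1 ≤ n) {i j : Fin n} (hij : i ≠ j) (r : ℕ) :
    ((2 * r + 1 : ℕ) : ℝ) * ∫ x, x i ^ (2 * r) * x j ^ 2 ∂surf n = mom n i (2 * r + 2) := by
  open Polynomial in
  have hp : (∑ l ∈ Finset.range (2 * (r + 1) + 1),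
      C (((2 * (r + 1)).choose l : ℝ) * ∫ x, x i ^ (2 * (r + 1) - l) * x j ^ l ∂surf n) * X ^ l)
      = (∑ l ∈ Finset.range (r + 1 + 1), C (((r + 1).choose l : ℝ) * mom n i (2 * (r + 1))) *
          X ^ (2 * l)) := by
    refine Polynomial.funext fun s => ?_
    have h := integral_add_mul_pow hij (r + 1) s
    have e : ∀ x : EuclideanSpace ℝ (Fin n), (x i + s * x j) ^ (2 * (r + 1)) =
        ∑ l ∈ Finset.range (2 * (r + 1) + 1),
          (s ^ l * ((2 * (r + 1)).choose l : ℝ)) * (x i ^ (2 * (r + 1) - l) * x j ^ l) := fun x => by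
      rw [add_comm, add_pow]
      refine Finset.sum_congr rfl fun l _ => ?_
      rw [mul_pow]; ring
    simp only [e] at h
    rw [integral_finsetSum _ fun l _ => integrable_surf hn (by fun_prop)] at h
    simp only [integral_const_mul] at h
    simp only [eval_finsetSum, eval_mul, eval_C, eval_pow, eval_X]
    rw [show (1 + s ^ 2) ^ (r + 1) = (s ^ 2 + 1) ^ (r + 1) by ring, add_pow, Finset.sum_mul] at h
    convert h using 2 with l _ l _
    · ring
    · simp only [one_pow, mul_one, pow_mul]; ring
  have hc := congrArg (fun p => Polynomial.coeff p 2) hp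
  simp only [Polynomial.finsetSum_coeff, Polynomial.coeff_C_mul_X_pow] at hc
  rw [Finset.sum_eq_single 2 (by intro b _ hb; rw [if_neg (Ne.symm hb)]) (by simp),
    Finset.sum_eq_single 1 (by intro b _ hb; rw [if_neg (by omega)]) (by simp)] at hc
  simp only [Nat.choose_one_right, if_true, mul_one] at hc
  rw [Nat.cast_choose_two, show 2 * (r + 1) - 2 = 2 * r by omega] at hc
  have hr : ((r : ℝ) + 1) ≠ 0 := by positivity
  apply mul_left_cancel₀ hr
  push_cast at hc ⊢
  rw [show 2 * r + 2 = 2 * (r + 1) by ring, ← hc]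
  ring

/-- The moment recursion, obtained from `mixed_moment` by summing over `j` and using
`∑ j, x_j ^ 2 = 1` on the sphere. -/
lemma mom_rec {n : ℕ} (hn : 1 ≤ n) (i : Fin n) (r : ℕ) :
    ((n : ℝ) + 2 * r) * mom n i (2 * r + 2) = (2 * r + 1) * mom n i (2 * r) := by
  have h1 : mom n i (2 * r) = ∑ j, ∫ x, x i ^ (2 * r) * x j ^ 2 ∂surf n := by
    rw [← integral_finsetSum _ fun j _ => integrable_surf hn (by fun_prop)]
    refine setIntegral_congr_fun Metric.isClosed_sphere.measurableSet fun x hx => ?_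
    have hx1 : ‖x‖ ^ 2 = 1 := by simp [mem_sphere_zero_iff_norm.1 hx]
    rw [EuclideanSpace.real_norm_sq_eq] at hx1
    simp only [← Finset.mul_sum, hx1, mul_one]
  have h2 : ∀ j ∈ Finset.univ.erase i, ∫ x, x i ^ (2 * r) * x j ^ 2 ∂surf n
      = mom n i (2 * r + 2) / (2 * r + 1) := fun j hj => by
    rw [← mixed_moment hn (Finset.ne_of_mem_erase hj).symm r]
    push_cast
    field_simp
  rw [← Finset.add_sum_erase _ _ (Finset.mem_univ i), Finset.sum_congr rfl h2,
    Finset.sum_const, Finset.card_erase_of_mem (Finset.mem_univ i), Finset.card_univ,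
    Fintype.card_fin, nsmul_eq_mul, Nat.cast_sub hn] at h1
  have h3 : ∫ x, x i ^ (2 * r) * x i ^ 2 ∂surf n = mom n i (2 * r + 2) := by
    simp only [mom, pow_add]
  rw [h3] at h1
  rw [h1]
  push_cast
  field_simp
  ring

lemma mom_pos {n : ℕ} (hn : 1 ≤ n) (i : Fin n) (r : ℕ) : 0 < mom n i (2 * r) := by
  induction r with
  | zero =>
    have := surf_univ hn
    simp only [mom, mul_zero, pow_zero, integral_const, smul_eq_mul, mul_one]
    exact ENNReal.toReal_pos this.1.ne' this.2.ne
  | succ r ih =>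
    have h := mom_rec hn i r
    have h0 : 0 < (n : ℝ) + 2 * r := by positivity
    have h1 : 0 < (2 * (r : ℝ) + 1) * mom n i (2 * r) := by positivity
    rw [← h] at h1
    exact pos_of_mul_pos_right h1 h0.le

/-! ### Gradient and Laplacian of zonal functions -/

lemma hasFDerivAt_inv_norm {n : ℕ} {y : EuclideanSpace ℝ (Fin n)} (hy : y ≠ 0) :
    HasFDerivAt (fun z : EuclideanSpace ℝ (Fin n) => ‖z‖⁻¹) (-(‖y‖⁻¹ ^ 3) • innerSL ℝ y) y := by
  have hy0 : ‖y‖ ≠ 0 := norm_ne_zero_iff.2 hy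
  have h1 := (hasStrictFDerivAt_norm_sq y).hasFDerivAt.sqrt (pow_ne_zero 2 hy0)
  simp only [Real.sqrt_sq (norm_nonneg _)] at h1
  have h2 := (hasDerivAt_inv hy0).comp_hasFDerivAt y h1
  refine h2.congr_fderiv ?_
  ext v
  simp
  field_simp

/-- The function `y_i / ‖y‖`, the degree-zero homogeneous extension of the coordinate `x_i`. -/
def ray {n : ℕ} (i : Fin n) (y : EuclideanSpace ℝ (Fin n)) : ℝ := ‖y‖⁻¹ * y i

lemma hasFDerivAt_ray {n : ℕ} (i : Fin n) {y : EuclideanSpace ℝ (Fin n)} (hy : y ≠ 0) :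
    HasFDerivAt (ray i) (‖y‖⁻¹ • (EuclideanSpace.proj i : EuclideanSpace ℝ (Fin n) →L[ℝ] ℝ)
      + y i • (-(‖y‖⁻¹ ^ 3) • innerSL ℝ y)) y :=
  (hasFDerivAt_inv_norm hy).mul ((EuclideanSpace.proj i : EuclideanSpace ℝ (Fin n) →L[ℝ] ℝ)).hasFDerivAt

lemma hasFDerivAt_sphExt {n : ℕ} (i : Fin n) {p p' : ℝ → ℝ} (hp : ∀ t, HasDerivAt p (p' t) t)
    {y : EuclideanSpace ℝ (Fin n)} (hy : y ≠ 0) :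
    HasFDerivAt (sphExt fun x : EuclideanSpace ℝ (Fin n) => p (x i))
      (p' (ray i y) • (‖y‖⁻¹ • (EuclideanSpace.proj i : EuclideanSpace ℝ (Fin n) →L[ℝ] ℝ)
        + y i • (-(‖y‖⁻¹ ^ 3) • innerSL ℝ y))) y :=
  (hp _).comp_hasFDerivAt y (hasFDerivAt_ray i hy)

/-- For a zonal function `p (x_i)` the intrinsic gradient is `p'(x_i) (e_i - x_i x)`. -/
lemma sphGradient_zonal {n : ℕ} (i : Fin n) {p p' : ℝ → ℝ} (hp : ∀ t, HasDerivAt p (p' t) t)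
    {x : EuclideanSpace ℝ (Fin n)} (hx : ‖x‖ = 1) :
    ‖sphGradient (fun x : EuclideanSpace ℝ (Fin n) => p (x i)) x‖ ^ 2
      = (1 - x i ^ 2) * p' (x i) ^ 2 := by
  have hx0 : x ≠ 0 := by rintro rfl; simp at hx
  have h := hasFDerivAt_sphExt i hp hx0
  have hg : HasGradientAt (sphExt fun x : EuclideanSpace ℝ (Fin n) => p (x i))
      (p' (x i) • (EuclideanSpace.single i 1 - x i • x)) x := by
    rw [hasGradientAt_iff_hasFDerivAt]
    refine h.congr_fderiv ?_
    ext v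
    simp [ray, hx, EuclideanSpace.inner_single_left]
    ring
  rw [sphGradient, hg.gradient, norm_smul, mul_pow, norm_sub_sq_real, norm_smul, mul_pow, hx]
  simp [inner_smul_right, EuclideanSpace.inner_single_left]
  ring

/-- On zonal functions the Laplace-Beltrami operator is the ordinary differential operator
`(1 - t ^ 2) p'' - (n - 1) t p'` in the variable `t = x_i`. -/
lemma sphLaplacian_zonal {n : ℕ} (i : Fin n) {p p' p'' : ℝ → ℝ}
    (hp : ∀ t, HasDerivAt p (p' t) t) (hp' : ∀ t, HasDerivAt p' (p'' t) t)
    {x : EuclideanSpace ℝ (Fin n)} (hx : ‖x‖ = 1) :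
    sphLaplacian (fun x : EuclideanSpace ℝ (Fin n) => p (x i)) x
      = (1 - x i ^ 2) * p'' (x i) - ((n : ℝ) - 1) * x i * p' (x i) := by
  have hx0 : x ≠ 0 := by rintro rfl; simp at hx
  have key : ∀ j : Fin n, fderiv ℝ (fun y => fderiv ℝ
      (sphExt fun x : EuclideanSpace ℝ (Fin n) => p (x i)) y (EuclideanSpace.single j 1)) x
      (EuclideanSpace.single j 1)
      = (if j = i then p'' (x i) * (1 - 2 * x i ^ 2) - 2 * p' (x i) * x i else 0)
        + (p'' (x i) * x i ^ 2 + 3 * p' (x i) * x i) * x j ^ 2 - p' (x i) * x i := fun j => by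
    -- Away from the origin the first derivative in the direction `e_j` is explicit.
    have hev : (fun y => fderiv ℝ (sphExt fun x : EuclideanSpace ℝ (Fin n) => p (x i)) y
        (EuclideanSpace.single j 1)) =ᶠ[nhds x] fun y => p' (ray i y) *
          (‖y‖⁻¹ * (if j = i then 1 else 0) - ‖y‖⁻¹ ^ 3 * (y j * y i)) := by
      filter_upwards [isOpen_ne.mem_nhds hx0] with y hy
      rw [(hasFDerivAt_sphExt i hp hy).fderiv]
      simp [EuclideanSpace.inner_single_right, eq_comm (a := i)]
      split_ifs <;> ring
    have hρ := hasFDerivAt_inv_norm hx0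
    have hi := ((EuclideanSpace.proj i : EuclideanSpace ℝ (Fin n) →L[ℝ] ℝ)).hasFDerivAt (x := x)
    have hj := ((EuclideanSpace.proj j : EuclideanSpace ℝ (Fin n) →L[ℝ] ℝ)).hasFDerivAt (x := x)
    have hu := (hp' _).comp_hasFDerivAt x (hasFDerivAt_ray i hx0)
    have H := hu.mul ((hρ.mul_const (if j = i then (1 : ℝ) else 0)).sub ((hρ.pow 3).mul (hj.mul hi)))
    rw [hev.fderiv_eq]
    refine (congrArg (fun L => L (EuclideanSpace.single j (1 : ℝ))) H.fderiv).trans ?_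
    by_cases h : j = i
    · subst h
      simp [ray, hx, EuclideanSpace.inner_single_right]
      ring
    · simp [ray, hx, EuclideanSpace.inner_single_right, h, Ne.symm h]
      ring
  have hx1 : ∑ j, x j ^ 2 = 1 := by
    rw [← EuclideanSpace.real_norm_sq_eq, hx, one_pow]
  rw [sphLaplacian, Finset.sum_congr rfl fun j _ => key j, Finset.sum_sub_distrib,
    Finset.sum_add_distrib, ← Finset.mul_sum, hx1]
  simp
  ring

/-! ### The degree-six polynomial -/

lemma integral_even_poly {n : ℕ} (hn : 1 ≤ n) (i : Fin n) (e : Fin 7 → ℝ) :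
    ∫ x, ∑ k, e k * x i ^ (2 * (k : ℕ)) ∂surf n = ∑ k, e k * mom n i (2 * (k : ℕ)) := by
  rw [integral_finsetSum _ fun l _ => integrable_surf hn (by fun_prop)]
  simp only [integral_const_mul, mom]

/-- The right-hand side is `∫ ψ t ^ 6 dσ` divided by `∫ t ^ 6 dσ` and by the (positive) coefficient
of `t ^ 2` in `ψ`, so this numerical inequality makes the energy of `ψ` positive. -/
lemma bracket_pos {N : ℝ} (hN : 3 ≤ N) :
    0 < (N + 3) * (N + 1) / 120 * (693 / ((N + 6) * (N + 8) * (N + 10)))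
      + (N + 1) / 12 * (63 / ((N + 6) * (N + 8))) + 7 / (N + 6) - 2 / (N - 1) := by
  obtain ⟨k, hk, rfl⟩ : ∃ k : ℝ, 0 ≤ k ∧ N = k + 3 := ⟨N - 3, by linarith, by ring⟩
  have h1 : k + 3 - 1 = k + 2 := by ring
  have h2 : (k + 3 + 3) * (k + 3 + 1) / 120 * (693 / ((k + 3 + 6) * (k + 3 + 8) * (k + 3 + 10)))
      + (k + 3 + 1) / 12 * (63 / ((k + 3 + 6) * (k + 3 + 8))) + 7 / (k + 3 + 6) - 2 / (k + 3 - 1)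
      = (231 / 40 * (k + 6) * (k + 4) * (k + 2) + 21 / 4 * (k + 4) * (k + 2) * (k + 13)
          + (5 * k ^ 3 + 116 * k ^ 2 + 619 * k - 572))
        / ((k + 9) * (k + 11) * (k + 13) * (k + 2)) := by
    rw [h1]
    field_simp
    ring
  rw [h2]
  refine div_pos ?_ (by positivity)
  have : 0 ≤ k ^ 3 := by positivity
  nlinarith [sq_nonneg k]

/-- For `Σ = S^{n-1}` with `n ≥ 3`, there is a smooth function `η` on `Σ`
with `Δ_Σ η + (n-1) η < 0` everywhere and `∫_Σ (|∇_Σ η|² - (n-1) η²) dσ > 0`. -/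
theorem stmt_6 (n : ℕ) (hn : 3 ≤ n) :
    ∃ η : EuclideanSpace ℝ (Fin n) → ℝ, ContDiff ℝ (⊤ : ℕ∞) η ∧
      (∀ x ∈ Metric.sphere (0 : EuclideanSpace ℝ (Fin n)) 1,
        sphLaplacian η x + ((n : ℝ) - 1) * η x < 0) ∧
      0 < ∫ x in Metric.sphere (0 : EuclideanSpace ℝ (Fin n)) 1,
            (‖sphGradient η x‖ ^ 2 - ((n : ℝ) - 1) * (η x) ^ 2) ∂(μH[(n : ℝ) - 1]) := by
  have hn1 : 1 ≤ n := by omega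
  let i : Fin n := ⟨0, by omega⟩
  have hN : (3 : ℝ) ≤ n := by exact_mod_cast hn
  have hK : (0 : ℝ) < n - 1 := by linarith
  -- The coefficients solve `Δψ + (n - 1) ψ = -t ^ 6`, one degree at a time.
  obtain ⟨a6, h6⟩ : ∃ a : ℝ, a * (5 * (n + 5)) = 1 :=
    ⟨(5 * (n + 5))⁻¹, inv_mul_cancel₀ (by positivity)⟩
  obtain ⟨a4, h4⟩ : ∃ a : ℝ, a * (n + 3) = 10 * a6 :=
    ⟨10 * a6 / (n + 3), div_mul_cancel₀ _ (by positivity)⟩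
  obtain ⟨a2, h2⟩ : ∃ a : ℝ, a * (n + 1) = 12 * a4 :=
    ⟨12 * a4 / (n + 1), div_mul_cancel₀ _ (by positivity)⟩
  obtain ⟨a0, h0⟩ : ∃ a : ℝ, a * (n - 1) = -2 * a2 :=
    ⟨-2 * a2 / (n - 1), div_mul_cancel₀ _ hK.ne'⟩
  have ha6 : 0 < a6 := pos_of_mul_pos_left (h6 ▸ one_pos) (by positivity)
  have ha4 : 0 < a4 := pos_of_mul_pos_left (h4 ▸ by positivity) (by positivity : (0 : ℝ) ≤ n + 3)
  have ha2 : 0 < a2 := pos_of_mul_pos_left (h2 ▸ by positivity) (by positivity : (0 : ℝ) ≤ n + 1)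
  set m := mom n i with hm
  have r0 : (n : ℝ) * m 2 = m 0 := by simpa using mom_rec hn1 i 0
  have r1 : ((n : ℝ) + 2) * m 4 = 3 * m 2 := by
    have := mom_rec hn1 i 1; norm_num at this; exact this
  have r2 : ((n : ℝ) + 4) * m 6 = 5 * m 4 := by
    have := mom_rec hn1 i 2; norm_num at this; exact this
  have r3 : ((n : ℝ) + 6) * m 8 = 7 * m 6 := by
    have := mom_rec hn1 i 3; norm_num at this; exact this
  have r4 : ((n : ℝ) + 8) * m 10 = 9 * m 8 := by
    have := mom_rec hn1 i 4; norm_num at this; exact this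
  have r5 : ((n : ℝ) + 10) * m 12 = 11 * m 10 := by
    have := mom_rec hn1 i 5; norm_num at this; exact this
  have hm6 : 0 < m 6 := mom_pos hn1 i 3
  have hE : 0 < a6 * m 12 + a4 * m 10 + a2 * m 8 + a0 * m 6 := by
    have e8 : m 8 = 7 / (n + 6) * m 6 := by field_simp; linarith
    have e10 : m 10 = 63 / ((n + 6) * (n + 8)) * m 6 := by
      have : m 10 = 9 * m 8 / (n + 8) := by field_simp; linarith
      rw [this, e8]; field_simp; ring
    have e12 : m 12 = 693 / ((n + 6) * (n + 8) * (n + 10)) * m 6 := by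
      have : m 12 = 11 * m 10 / (n + 10) := by field_simp; linarith
      rw [this, e10]; field_simp; ring
    have f0 : a0 = -(2 / (n - 1)) * a2 := by field_simp; linarith
    have f4 : a4 = (n + 1) / 12 * a2 := by linarith
    have f6 : a6 = (n + 3) * (n + 1) / 120 * a2 := by
      rw [f4] at h4; linarith
    have hb := mul_pos (mul_pos ha2 hm6) (bracket_pos hN)
    rw [e8, e10, e12, f0, f6, f4]
    refine hb.trans_eq ?_
    ring
  -- Positivity of the energy survives subtracting a small constant.
  obtain ⟨c, hc, hcE⟩ : ∃ c : ℝ, 0 < c ∧ 0 < (a6 * m 12 + a4 * m 10 + a2 * m 8 + (a0 - c) * m 6)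
      + (n - 1) * c * (a6 * m 6 + a4 * m 4 + a2 * m 2 + (a0 - c) * m 0) := by
    have hcont : Continuous fun c : ℝ => (a6 * m 12 + a4 * m 10 + a2 * m 8 + (a0 - c) * m 6)
      + (n - 1) * c * (a6 * m 6 + a4 * m 4 + a2 * m 2 + (a0 - c) * m 0) := by fun_prop
    have hev := (hcont.tendsto 0).eventually (lt_mem_nhds (a := 0) (by simpa using hE))
    obtain ⟨c, hc⟩ := ((hev.filter_mono nhdsWithin_le_nhds).and
      (self_mem_nhdsWithin (s := Set.Ioi (0 : ℝ)))).exists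
    exact ⟨c, hc.2, hc.1⟩
  let p : ℝ → ℝ := fun t => a6 * t ^ 6 + a4 * t ^ 4 + a2 * t ^ 2 + (a0 - c)
  let p' : ℝ → ℝ := fun t => a6 * (6 * t ^ 5) + a4 * (4 * t ^ 3) + a2 * (2 * t)
  let p'' : ℝ → ℝ := fun t => a6 * (30 * t ^ 4) + a4 * (12 * t ^ 2) + a2 * 2
  have hp : ∀ t, HasDerivAt p (p' t) t := fun t => by
    have := ((((hasDerivAt_pow 6 t).const_mul a6).add ((hasDerivAt_pow 4 t).const_mul a4)).add
      ((hasDerivAt_pow 2 t).const_mul a2)).add_const (a0 - c)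
    convert! this using 1
    simp [p']
  have hp' : ∀ t, HasDerivAt p' (p'' t) t := fun t => by
    have := ((((hasDerivAt_pow 5 t).const_mul 6).const_mul a6).add
      (((hasDerivAt_pow 3 t).const_mul 4).const_mul a4)).add
      (((hasDerivAt_id t).const_mul 2).const_mul a2)
    convert! this using 1
    simp only [p'']
    norm_num
    ring
  refine ⟨fun x => p (x i), by fun_prop, fun x hx => ?_, ?_⟩
  · rw [sphLaplacian_zonal i hp hp' (mem_sphere_zero_iff_norm.1 hx)]
    have : (1 - x i ^ 2) * p'' (x i) - ((n : ℝ) - 1) * x i * p' (x i) + ((n : ℝ) - 1) * p (x i)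
        = -(x i ^ 6 + (n - 1) * c) := by
      simp only [p, p', p'']
      linear_combination (-x i ^ 6) * h6 - 3 * x i ^ 4 * h4 - x i ^ 2 * h2 + h0
    rw [this]
    have : 0 ≤ x i ^ 6 := by positivity
    have := mul_pos hK hc
    linarith
  · let b := a0 - c
    let e : Fin 7 → ℝ := ![-(n - 1) * b ^ 2, 4 * a2 ^ 2 - 2 * (n - 1) * a2 * b,
      16 * a4 * a2 - 4 * a2 ^ 2 - (n - 1) * (2 * a4 * b + a2 ^ 2),
      24 * a6 * a2 + 16 * a4 ^ 2 - 16 * a4 * a2 - (n - 1) * (2 * a6 * b + 2 * a4 * a2),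
      48 * a6 * a4 - (24 * a6 * a2 + 16 * a4 ^ 2) - (n - 1) * (2 * a6 * a2 + a4 ^ 2),
      36 * a6 ^ 2 - 48 * a6 * a4 - 2 * (n - 1) * a6 * a4, -36 * a6 ^ 2 - (n - 1) * a6 ^ 2]
    have hint : ∫ x in Metric.sphere (0 : EuclideanSpace ℝ (Fin n)) 1,
        (‖sphGradient (fun x : EuclideanSpace ℝ (Fin n) => p (x i)) x‖ ^ 2
          - ((n : ℝ) - 1) * p (x i) ^ 2) ∂(μH[(n : ℝ) - 1])
        = ∫ x, ∑ k, e k * x i ^ (2 * (k : ℕ)) ∂surf n := by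
      refine setIntegral_congr_fun Metric.isClosed_sphere.measurableSet fun x hx => ?_
      simp only [sphGradient_zonal i hp (mem_sphere_zero_iff_norm.1 hx), p, p', e, b,
        Fin.sum_univ_seven]
      simp
      ring
    rw [hint, integral_even_poly hn1, ← hm]
    convert hcE using 1
    simp only [e, b, Fin.sum_univ_seven]
    simp
    -- The coefficients of `r0`, ..., `r5` encode the integration by parts
    -- `∫ |∇η|² = -∫ η Δη`; those of `h0`, ..., `h6` the equation for `ψ`.
    linear_combination (-6 * a6 ^ 2) * r5 - 10 * a6 * a4 * r4 - 4 * (2 * a6 * a2 + a4 ^ 2) * r3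
      - 3 * (2 * a6 * (a0 - c) + 2 * a4 * a2) * r2 - 2 * (2 * a4 * (a0 - c) + a2 ^ 2) * r1
      - 2 * a2 * (a0 - c) * r0
      + (a6 * m 12 + a4 * m 10 + a2 * m 8 + (a0 - c) * m 6) * h6
      + 3 * (a6 * m 10 + a4 * m 8 + a2 * m 6 + (a0 - c) * m 4) * h4
      + (a6 * m 8 + a4 * m 6 + a2 * m 4 + (a0 - c) * m 2) * h2
      - (a6 * m 6 + a4 * m 4 + a2 * m 2 + (a0 - c) * m 0) * h0
end
end
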